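/- Combining the factorization of the BIMC posterior, the truncated-normal identification of q₁*, and the optimal parameter choice (y*, σ*²), the BIMC importance sampling density q_BIMC(x) = p(y*|x)p(x)/p(y*) is the Gaussian density on ℝᵐ closest in KL divergence to the ideal importance sampling density q*(x) = 1_Y(vᵀx + β) p(x)/μ, when p is the standard Gaussian on ℝᵐ and f is affine. -/

import Mathlib

open Real Matrix MeasureTheory

open ProbabilityTheory
open scoped ENNReal NNReal

/-!
Both `q*` and `q_BIMC` are the standard Gaussian law with its marginal along `v` replaced: by the
truncated normal for `q*`, and, by completing the square, by another normal for `q_BIMC`. The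
choice of `y*` and `σ*²` makes these two marginals agree in mean and variance, so `q*` and `q_BIMC`
give the same integral to every quadratic polynomial. The logarithm of a Gaussian density `g` is
quadratic, hence so is `log (q_BIMC / g)`, and
`KL(q* ‖ g) - KL(q* ‖ q_BIMC) = ∫ q* log (q_BIMC / g) = KL(q_BIMC ‖ g) ≥ 0`.
-/

section Divergence

variable {α : Type*} [MeasurableSpace α] {ν : Measure α} {q r g : α → ℝ}

theorem integral_sub_integral_le_integral_mul_log_div (hr : ∀ x, 0 < r x) (hg : ∀ x, 0 < g x)
    (hri : Integrable r ν) (hgi : Integrable g ν)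
    (hrg : Integrable (fun x ↦ r x * log (r x / g x)) ν) :
    ∫ x, r x ∂ν - ∫ x, g x ∂ν ≤ ∫ x, r x * log (r x / g x) ∂ν := by
  rw [← integral_sub hri hgi]
  refine integral_mono (hri.sub hgi) hrg fun x ↦ ?_
  have hlog : log (g x / r x) ≤ g x / r x - 1 := log_le_sub_one_of_pos (div_pos (hg x) (hr x))
  calc r x - g x = r x * -(g x / r x - 1) := by field_simp [(hr x).ne']; ring
    _ ≤ r x * -log (g x / r x) := by have := (hr x).le; gcongr
    _ = r x * log (r x / g x) := by rw [← log_inv, inv_div]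

theorem integral_mul_log_div_le_of_integral_mul_log_div_eq (hr : ∀ x, 0 < r x) (hg : ∀ x, 0 < g x)
    (hri : Integrable r ν) (hgi : Integrable g ν) (hmass : ∫ x, g x ∂ν ≤ ∫ x, r x ∂ν)
    (hqr : Integrable (fun x ↦ q x * log (q x / r x)) ν)
    (hqg : Integrable (fun x ↦ q x * log (r x / g x)) ν)
    (hrg : Integrable (fun x ↦ r x * log (r x / g x)) ν)
    (heq : ∫ x, q x * log (r x / g x) ∂ν = ∫ x, r x * log (r x / g x) ∂ν) :
    ∫ x, q x * log (q x / r x) ∂ν ≤ ∫ x, q x * log (q x / g x) ∂ν := by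
  have hsplit (x : α) : q x * log (q x / g x) = q x * log (q x / r x) + q x * log (r x / g x) := by
    rcases eq_or_ne (q x) 0 with hq | hq
    · simp [hq]
    · rw [log_div hq (hg x).ne', log_div hq (hr x).ne', log_div (hr x).ne' (hg x).ne']
      ring
  have hgibbs := integral_sub_integral_le_integral_mul_log_div hr hg hri hgi hrg
  simp only [hsplit]
  rw [integral_add hqr hqg, heq]
  linarith

end Divergence

section WithDensity

variable {α β : Type*} [MeasurableSpace α] [MeasurableSpace β] {ν : Measure α} {q : α → ℝ}

theorem integrable_withDensity_ofReal_iff (hqm : Measurable q) (hq : ∀ x, 0 ≤ q x) {F : α → ℝ} :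
    Integrable F (ν.withDensity fun x ↦ ENNReal.ofReal (q x)) ↔
      Integrable (fun x ↦ q x * F x) ν := by
  rw [integrable_withDensity_iff_integrable_smul' hqm.ennreal_ofReal
    (Filter.Eventually.of_forall fun _ ↦ ENNReal.ofReal_lt_top)]
  simp only [ENNReal.toReal_ofReal (hq _), smul_eq_mul]

theorem integral_withDensity_ofReal (hqm : Measurable q) (hq : ∀ x, 0 ≤ q x) (F : α → ℝ) :
    ∫ x, F x ∂(ν.withDensity fun x ↦ ENNReal.ofReal (q x)) = ∫ x, q x * F x ∂ν := by
  rw [integral_withDensity_eq_integral_toReal_smul hqm.ennreal_ofReal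
    (Filter.Eventually.of_forall fun _ ↦ ENNReal.ofReal_lt_top)]
  simp only [ENNReal.toReal_ofReal (hq _), smul_eq_mul]

theorem map_withDensity_comp {T : α → β} (hT : Measurable T) {f : β → ℝ≥0∞} (hf : Measurable f) :
    (ν.withDensity (f ∘ T)).map T = (ν.map T).withDensity f := by
  ext s hs
  rw [Measure.map_apply hT hs, withDensity_apply _ (hT hs), withDensity_apply _ hs,
    setLIntegral_map hs hf hT]
  rfl

end WithDensity

section IsQuadratic

variable {ι : Type*} [Fintype ι]

/-- The real functions `x ↦ xᵀAx + bᵀx + k` on `ℝ^ι`. The matrix `A` need not be symmetric. -/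
def IsQuadratic (F : (ι → ℝ) → ℝ) : Prop :=
  ∃ (A : Matrix ι ι ℝ) (b : ι → ℝ) (k : ℝ), ∀ x, F x = x ⬝ᵥ A *ᵥ x + b ⬝ᵥ x + k

namespace IsQuadratic

variable {F G : (ι → ℝ) → ℝ}

theorem const (k : ℝ) : IsQuadratic fun _ : ι → ℝ ↦ k :=
  ⟨0, 0, k, fun x ↦ by simp⟩

theorem add (hF : IsQuadratic F) (hG : IsQuadratic G) : IsQuadratic fun x ↦ F x + G x := by
  obtain ⟨A, b, k, hF⟩ := hF
  obtain ⟨A', b', k', hG⟩ := hG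
  refine ⟨A + A', b + b', k + k', fun x ↦ ?_⟩
  simp only [hF, hG, add_mulVec, dotProduct_add, add_dotProduct]
  ring

theorem const_mul (c : ℝ) (hF : IsQuadratic F) : IsQuadratic fun x ↦ c * F x := by
  obtain ⟨A, b, k, hF⟩ := hF
  refine ⟨c • A, c • b, c * k, fun x ↦ ?_⟩
  simp only [hF, smul_mulVec, dotProduct_smul, smul_dotProduct, smul_eq_mul]
  ring

theorem sub (hF : IsQuadratic F) (hG : IsQuadratic G) : IsQuadratic fun x ↦ F x - G x := by
  simpa only [sub_eq_add_neg, neg_one_mul] using hF.add (hG.const_mul (-1))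

theorem sq_affine (u : ι → ℝ) (k : ℝ) : IsQuadratic fun x ↦ (u ⬝ᵥ x + k) ^ 2 := by
  refine ⟨vecMulVec u u, (2 * k) • u, k ^ 2, fun x ↦ ?_⟩
  simp only [vecMulVec_mulVec, op_smul_eq_smul, dotProduct_smul, smul_dotProduct,
    dotProduct_comm x u, smul_eq_mul]
  ring

theorem quadraticForm_sub (A : Matrix ι ι ℝ) (c : ι → ℝ) :
    IsQuadratic fun x ↦ (x - c) ⬝ᵥ A *ᵥ (x - c) := by
  refine ⟨A, -(A *ᵥ c + c ᵥ* A), c ⬝ᵥ A *ᵥ c, fun x ↦ ?_⟩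
  simp only [mulVec_sub, dotProduct_sub, sub_dotProduct, neg_dotProduct, add_dotProduct,
    dotProduct_mulVec c A x, dotProduct_comm x (A *ᵥ c)]
  ring

protected theorem measurable (hF : IsQuadratic F) : Measurable F := by
  obtain ⟨A, b, k, hF⟩ := hF
  rw [funext hF]
  simp only [dotProduct, mulVec]
  fun_prop

protected theorem integrable (hF : IsQuadratic F) {μ : Measure (ι → ℝ)} [IsFiniteMeasure μ]
    (hμ : MemLp id 2 μ) : Integrable F μ := by
  obtain ⟨A, b, k, hF⟩ := hF
  have hcoord (i : ι) : MemLp (fun x : ι → ℝ ↦ x i) 2 μ := hμ.eval i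
  have hlin (u : ι → ℝ) : MemLp (fun x ↦ u ⬝ᵥ x) 2 μ :=
    memLp_finsetSum _ fun i _ ↦ (hcoord i).const_mul (u i)
  rw [funext hF]
  refine (Integrable.add ?_ ((hlin b).integrable one_le_two)).add (integrable_const k)
  exact integrable_finsetSum _ fun i _ ↦ (hcoord i).integrable_mul (hlin (A i))

theorem exists_forall_smul_add_eq (hF : IsQuadratic F) (e w : ι → ℝ) :
    ∃ a b c : ℝ, ∀ t : ℝ, F (t • e + w) = a * t ^ 2 + b * t + c := by
  obtain ⟨A, b, k, hF⟩ := hF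
  refine ⟨e ⬝ᵥ A *ᵥ e, e ⬝ᵥ A *ᵥ w + w ⬝ᵥ A *ᵥ e + b ⬝ᵥ e, F w, fun t ↦ ?_⟩
  simp only [hF, mulVec_add, mulVec_smul, dotProduct_add, add_dotProduct, dotProduct_smul,
    smul_dotProduct, smul_eq_mul]
  ring

end IsQuadratic

end IsQuadratic

section OneDimensional

theorem gaussianPDFReal_zero_one (t : ℝ) :
    gaussianPDFReal 0 1 t = (2 * π) ^ (-(1 : ℝ) / 2) * exp (-t ^ 2 / 2) := by
  simp only [gaussianPDFReal, NNReal.coe_one, mul_one, sub_zero, neg_div]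
  rw [sqrt_eq_rpow, ← rpow_neg (by positivity)]

theorem hasDerivAt_gaussianPDFReal (μ : ℝ) (v : ℝ≥0) (t : ℝ) :
    HasDerivAt (gaussianPDFReal μ v) (-(t - μ) / v * gaussianPDFReal μ v t) t := by
  have hexp : HasDerivAt (fun t ↦ -(t - μ) ^ 2 / (2 * v)) (-(t - μ) / v) t := by
    refine ((((hasDerivAt_id t).sub_const μ).pow 2).neg.div_const (2 * (v : ℝ))).congr_deriv ?_
    simp only [id_eq, Nat.cast_ofNat, Nat.add_one_sub_one, pow_one, mul_one]
    ring
  exact (hexp.exp.const_mul (√(2 * π * v))⁻¹).congr_deriv (by simp only [gaussianPDFReal]; ring)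

theorem setIntegral_gaussianReal (μ : ℝ) {v : ℝ≥0} (hv : v ≠ 0) {s : Set ℝ} (hs : MeasurableSet s)
    (F : ℝ → ℝ) :
    ∫ t in s, F t ∂(gaussianReal μ v) = ∫ t in s, F t * gaussianPDFReal μ v t := by
  rw [gaussianReal_of_var_ne_zero μ hv, restrict_withDensity hs, gaussianPDF_def,
    integral_withDensity_ofReal (measurable_gaussianPDFReal μ v) (gaussianPDFReal_nonneg μ v)]
  simp only [mul_comm]

theorem integral_Icc_one_sub_mul_gaussianPDFReal {a b : ℝ} (hab : a ≤ b) (c : ℝ) :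
    ∫ t in Set.Icc a b, (1 - t * (t - c)) * gaussianPDFReal 0 1 t =
      (b - c) * gaussianPDFReal 0 1 b + (c - a) * gaussianPDFReal 0 1 a := by
  have hcont : Continuous (gaussianPDFReal 0 1) :=
    continuous_iff_continuousAt.mpr fun t ↦ (hasDerivAt_gaussianPDFReal 0 1 t).continuousAt
  have hderiv (t : ℝ) : HasDerivAt (fun t ↦ (t - c) * gaussianPDFReal 0 1 t)
      ((1 - t * (t - c)) * gaussianPDFReal 0 1 t) t := by
    refine (((hasDerivAt_id t).sub_const c).mul (hasDerivAt_gaussianPDFReal 0 1 t)).congr_deriv ?_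
    simp only [id_eq, NNReal.coe_one]
    ring
  rw [integral_Icc_eq_integral_Ioc, ← intervalIntegral.integral_of_le hab,
    intervalIntegral.integral_eq_sub_of_hasDerivAt (fun t _ ↦ hderiv t)
      (Continuous.intervalIntegrable (by fun_prop) a b)]
  ring

theorem integral_cond {Ω : Type*} [MeasurableSpace Ω] (μ : Measure Ω) (s : Set Ω) (F : Ω → ℝ) :
    ∫ x, F x ∂μ[|s] = (∫ x in s, F x ∂μ) / μ.real s := by
  rw [ProbabilityTheory.cond, integral_smul_measure, ENNReal.toReal_inv, smul_eq_mul,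
    inv_mul_eq_div, Measure.real]

theorem memLp_cond {Ω : Type*} [MeasurableSpace Ω] {μ : Measure Ω} {s : Set Ω} (hs : μ s ≠ 0)
    {F : Ω → ℝ} {p : ℝ≥0∞} (hF : MemLp F p μ) : MemLp F p μ[|s] :=
  (hF.restrict s).smul_measure (ENNReal.inv_ne_top.mpr hs)

theorem integral_gaussianReal_cond {A : Set ℝ} (hA : MeasurableSet A) (F : ℝ → ℝ) :
    ∫ t, F t ∂(gaussianReal 0 1)[|A] =
      (∫ t in A, F t * gaussianPDFReal 0 1 t) / ∫ t in A, gaussianPDFReal 0 1 t := by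
  rw [integral_cond, setIntegral_gaussianReal 0 one_ne_zero hA, Measure.real,
    gaussianReal_apply_eq_integral 0 one_ne_zero, ENNReal.toReal_ofReal]
  exact integral_nonneg (gaussianPDFReal_nonneg 0 1)

theorem variance_id_gaussianReal_cond {A : Set ℝ} (hA : MeasurableSet A)
    (hA0 : gaussianReal 0 1 A ≠ 0) :
    Var[id; (gaussianReal 0 1)[|A]] =
      (∫ t in A, t ^ 2 * gaussianPDFReal 0 1 t) / (∫ t in A, gaussianPDFReal 0 1 t) -
        ((∫ t in A, t * gaussianPDFReal 0 1 t) / ∫ t in A, gaussianPDFReal 0 1 t) ^ 2 := by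
  have := cond_isProbabilityMeasure hA0
  rw [variance_eq_sub (memLp_cond hA0 (memLp_id_gaussianReal 2)), ← integral_gaussianReal_cond hA,
    ← integral_gaussianReal_cond hA]
  rfl

theorem variance_id_pos {μ : Measure ℝ} [IsProbabilityMeasure μ] [NullSingletonClass μ]
    (hμ : MemLp id 2 μ) : 0 < Var[id; μ] := by
  refine (variance_nonneg id μ).lt_of_ne' fun hzero ↦ ?_
  have hconst : ∀ᵐ t ∂μ, t = ∫ t, t ∂μ := ae_eq_integral_of_variance_eq_zero hμ hzero
  have hnull : ∀ᵐ t ∂μ, t ≠ ∫ t, t ∂μ := Measure.ae_ne μ _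
  obtain ⟨t, heq, hne⟩ := (hconst.and hnull).exists
  exact hne heq

theorem one_sub_variance_id {μ : Measure ℝ} [IsProbabilityMeasure μ] (hμ : MemLp id 2 μ) :
    1 - Var[id; μ] = ∫ t, (1 - t * (t - ∫ s, s ∂μ)) ∂μ := by
  have hid : Integrable (fun t : ℝ ↦ t) μ := hμ.integrable one_le_two
  have hsq : Integrable (fun t : ℝ ↦ t ^ 2) μ := hμ.integrable_sq
  have hexpand (t : ℝ) : 1 - t * (t - ∫ s, s ∂μ) = 1 - t ^ 2 + t * ∫ s, s ∂μ := by ring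
  simp only [hexpand]
  rw [integral_add (by fun_prop) (hid.mul_const _), integral_sub (by fun_prop) hsq,
    integral_mul_const, variance_eq_sub hμ]
  simp only [integral_const, probReal_univ, smul_eq_mul, mul_one, Pi.pow_apply, id_eq]
  ring

theorem gaussianReal_Icc_ne_zero {a b : ℝ} (hab : a < b) :
    gaussianReal 0 1 (Set.Icc a b) ≠ 0 := fun h ↦ by
  have hvol : volume (Set.Icc a b) = 0 := gaussianReal_absolutelyContinuous' 0 one_ne_zero h
  simp only [Real.volume_Icc, ENNReal.ofReal_eq_zero, sub_nonpos] at hvol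
  exact hvol.not_gt hab

theorem gaussianReal_cond_Icc_variance_mem_Ioo {a b : ℝ} (hab : a < b) :
    Var[id; (gaussianReal 0 1)[|Set.Icc a b]] ∈ Set.Ioo 0 1 := by
  have hN := gaussianReal_Icc_ne_zero hab
  set τ := (gaussianReal 0 1)[|Set.Icc a b] with hτ
  have : IsProbabilityMeasure τ := cond_isProbabilityMeasure hN
  have := nullSingletonClass_gaussianReal (μ := 0) one_ne_zero
  have : NullSingletonClass τ := ⟨fun t ↦ cond_absolutelyContinuous (measure_singleton t)⟩
  have hmem : MemLp id 2 τ := memLp_cond hN (memLp_id_gaussianReal 2)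
  have hmean : ∫ t, t ∂τ ∈ Set.Icc a b :=
    (convex_Icc a b).integral_mem isClosed_Icc (ae_cond_mem measurableSet_Icc)
      (hmem.integrable one_le_two)
  refine ⟨variance_id_pos hmem, sub_pos.mp ?_⟩
  rw [one_sub_variance_id hmem, hτ, integral_cond, ← hτ,
    setIntegral_gaussianReal 0 one_ne_zero measurableSet_Icc,
    integral_Icc_one_sub_mul_gaussianPDFReal hab.le]
  have ha := gaussianPDFReal_pos 0 1 a one_ne_zero
  have hb := gaussianPDFReal_pos 0 1 b one_ne_zero
  refine div_pos ?_ (ENNReal.toReal_pos hN (measure_ne_top _ _))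
  obtain ⟨hle_mean, hmean_le⟩ := hmean
  rcases hle_mean.lt_or_eq with hlt | heq
  · exact add_pos_of_nonneg_of_pos (mul_nonneg (sub_nonneg.mpr hmean_le) hb.le)
      (mul_pos (sub_pos.mpr hlt) ha)
  · exact add_pos_of_pos_of_nonneg (mul_pos (sub_pos.mpr (heq ▸ hab)) hb)
      (mul_nonneg (sub_nonneg.mpr hle_mean) ha.le)

theorem gaussianPDFReal_affine_mul_gaussianPDFReal (n β y : ℝ) {s : ℝ≥0} (hs : s ≠ 0) (t : ℝ) :
    gaussianPDFReal (n * t + β) s y * gaussianPDFReal 0 1 t =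
      gaussianPDFReal β (‖n‖₊ ^ 2 + s) y *
        gaussianPDFReal (n * (y - β) / (n ^ 2 + s)) (s / (‖n‖₊ ^ 2 + s)) t := by
  simp only [gaussianPDFReal, NNReal.coe_div, NNReal.coe_add, NNReal.coe_pow, coe_nnnorm,
    norm_eq_abs, sq_abs, NNReal.coe_one, mul_one, sub_zero]
  have hsqrt : √(2 * π * s) * √(2 * π) = √(2 * π * (n ^ 2 + s)) * √(2 * π * (s / (n ^ 2 + s))) := by
    rw [← sqrt_mul (by positivity), ← sqrt_mul (by positivity)]
    field_simp
  rw [mul_mul_mul_comm, mul_mul_mul_comm (√(2 * π * (n ^ 2 + s)))⁻¹, ← mul_inv, ← mul_inv, hsqrt,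
    ← exp_add, ← exp_add]
  congr 2
  field_simp
  ring

theorem withDensity_gaussianPDFReal_affine (n β y : ℝ) {s : ℝ≥0} (hs : s ≠ 0) :
    (gaussianReal 0 1).withDensity (fun t ↦ ENNReal.ofReal (gaussianPDFReal (n * t + β) s y)) =
      gaussianPDF β (‖n‖₊ ^ 2 + s) y •
        gaussianReal (n * (y - β) / (n ^ 2 + s)) (s / (‖n‖₊ ^ 2 + s)) := by
  have hpost : s / (‖n‖₊ ^ 2 + s) ≠ 0 := by positivity
  have hlik : Measurable fun t ↦ gaussianPDFReal (n * t + β) s y := by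
    simp only [gaussianPDFReal]
    fun_prop
  rw [gaussianReal_of_var_ne_zero _ one_ne_zero, gaussianReal_of_var_ne_zero _ hpost,
    ← withDensity_mul _ (measurable_gaussianPDF 0 1) hlik.ennreal_ofReal,
    ← withDensity_smul _ (measurable_gaussianPDF _ _)]
  refine congrArg _ (funext fun t ↦ ?_)
  rw [Pi.mul_apply, Pi.smul_apply, smul_eq_mul, gaussianPDF, gaussianPDF, gaussianPDF,
    ← ENNReal.ofReal_mul (gaussianPDFReal_nonneg _ _ _),
    ← ENNReal.ofReal_mul (gaussianPDFReal_nonneg _ _ _), mul_comm,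
    gaussianPDFReal_affine_mul_gaussianPDFReal n β y hs t]

end OneDimensional

section Multivariate

variable {ι : Type*} [Fintype ι] [DecidableEq ι]

/-- The density with respect to Lebesgue measure of the Gaussian law on `ℝ^ι` with mean `c` and
covariance matrix `S`, meaningful for positive definite `S`. -/
noncomputable def multivariateGaussianPDF (c : ι → ℝ) (S : Matrix ι ι ℝ) (x : ι → ℝ) : ℝ :=
  (2 * π) ^ (-(Fintype.card ι : ℝ) / 2) * S.det ^ (-(1 : ℝ) / 2) *
    exp (-(1 / 2) * ((x - c) ⬝ᵥ S⁻¹ *ᵥ (x - c)))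

theorem multivariateGaussianPDF_zero_one (x : ι → ℝ) :
    multivariateGaussianPDF 0 1 x =
      (2 * π) ^ (-(Fintype.card ι : ℝ) / 2) * exp (-(x ⬝ᵥ x) / 2) := by
  simp only [multivariateGaussianPDF, det_one, one_rpow, mul_one, sub_zero, inv_one, one_mulVec]
  ring_nf

theorem multivariateGaussianPDF_zero_one_eq_prod (x : ι → ℝ) :
    multivariateGaussianPDF 0 1 x = ∏ i, gaussianPDFReal 0 1 (x i) := by
  simp only [multivariateGaussianPDF_zero_one, gaussianPDFReal_zero_one]
  rw [Finset.prod_mul_distrib, ← exp_sum, Finset.prod_const, Finset.card_univ,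
    ← rpow_mul_natCast (by positivity)]
  congr 2
  · ring
  · simp only [dotProduct, ← Finset.sum_div, Finset.sum_neg_distrib, pow_two]

theorem multivariateGaussianPDF_pos (c : ι → ℝ) {S : Matrix ι ι ℝ} (hS : S.PosDef) (x : ι → ℝ) :
    0 < multivariateGaussianPDF c S x := by
  have := hS.det_pos
  unfold multivariateGaussianPDF
  positivity

theorem measurable_multivariateGaussianPDF (c : ι → ℝ) (S : Matrix ι ι ℝ) :
    Measurable (multivariateGaussianPDF c S) := by
  have := (IsQuadratic.quadraticForm_sub S⁻¹ c).measurable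
  unfold multivariateGaussianPDF
  fun_prop

theorem isQuadratic_log_multivariateGaussianPDF (c : ι → ℝ) {S : Matrix ι ι ℝ} (hS : S.PosDef) :
    IsQuadratic fun x ↦ log (multivariateGaussianPDF c S x) := by
  have hdet := hS.det_pos
  have hlog (x : ι → ℝ) : log (multivariateGaussianPDF c S x) =
      log ((2 * π) ^ (-(Fintype.card ι : ℝ) / 2) * S.det ^ (-(1 : ℝ) / 2)) +
        -(1 / 2) * ((x - c) ⬝ᵥ S⁻¹ *ᵥ (x - c)) := by
    rw [multivariateGaussianPDF, log_mul (by positivity) (exp_pos _).ne', log_exp]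
  simp only [hlog]
  exact (IsQuadratic.const _).add ((IsQuadratic.quadraticForm_sub S⁻¹ c).const_mul _)

theorem pi_gaussianReal_eq_withDensity :
    Measure.pi (fun _ : ι ↦ gaussianReal 0 1) =
      volume.withDensity fun x ↦ ENNReal.ofReal (multivariateGaussianPDF 0 1 x) := by
  refine Measure.pi_eq fun s hs ↦ ?_
  have hint : Integrable fun x : ι → ℝ ↦ ∏ i, gaussianPDFReal 0 1 (x i) :=
    Integrable.fintype_prod fun _ ↦ integrable_gaussianPDFReal 0 1
  have hnonneg (x : ι → ℝ) : 0 ≤ ∏ i, gaussianPDFReal 0 1 (x i) :=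
    Finset.prod_nonneg fun i _ ↦ gaussianPDFReal_nonneg 0 1 (x i)
  simp only [multivariateGaussianPDF_zero_one_eq_prod]
  rw [withDensity_apply _ (MeasurableSet.univ_pi hs),
    ← ofReal_integral_eq_lintegral_ofReal hint.integrableOn
      (Filter.Eventually.of_forall hnonneg), volume_pi, Measure.restrict_pi_pi,
    integral_fintype_prod_eq_prod (f := fun _ ↦ gaussianPDFReal 0 1),
    ENNReal.ofReal_prod_of_nonneg fun _ _ ↦ integral_nonneg (gaussianPDFReal_nonneg 0 1)]
  simp only [gaussianReal_apply_eq_integral 0 one_ne_zero]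

theorem integral_multivariateGaussianPDF_zero_one :
    ∫ x : ι → ℝ, multivariateGaussianPDF 0 1 x = 1 := by
  simp only [multivariateGaussianPDF_zero_one_eq_prod]
  rw [integral_fintype_prod_volume_eq_prod (f := fun _ ↦ gaussianPDFReal 0 1)]
  simp only [integral_gaussianPDFReal_eq_one 0 one_ne_zero, Finset.prod_const_one]

theorem multivariateGaussianPDF_eq_abs_det_mul (c : ι → ℝ) {S B : Matrix ι ι ℝ} (hS : 0 < S.det)
    (hB : S⁻¹ = Bᵀ * B) (x : ι → ℝ) :
    multivariateGaussianPDF c S x =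
      |B.det| * multivariateGaussianPDF 0 1 (B *ᵥ (x - c)) := by
  have hdet_sq : S.det⁻¹ = B.det ^ 2 := by
    rw [← Ring.inverse_eq_inv', ← det_nonsing_inv, hB, det_mul, det_transpose, pow_two]
  have hdet : S.det ^ (-(1 : ℝ) / 2) = |B.det| := by
    rw [neg_div, rpow_neg hS.le, ← sqrt_eq_rpow, ← sqrt_inv, hdet_sq, sqrt_sq_eq_abs]
  have hquad : (x - c) ⬝ᵥ S⁻¹ *ᵥ (x - c) = B *ᵥ (x - c) ⬝ᵥ B *ᵥ (x - c) := by
    rw [hB, ← mulVec_mulVec, dotProduct_mulVec, vecMul_transpose]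
  rw [multivariateGaussianPDF_zero_one, multivariateGaussianPDF, hdet, hquad]
  ring_nf

theorem integral_multivariateGaussianPDF (c : ι → ℝ) {S : Matrix ι ι ℝ} (hS : S.PosDef) :
    ∫ x, multivariateGaussianPDF c S x = 1 := by
  open scoped MatrixOrder in
  obtain ⟨B, hB⟩ := CStarAlgebra.nonneg_iff_eq_star_mul_self.mp hS.inv.posSemidef.nonneg
  have hBdet : B.det ≠ 0 := fun h ↦ by
    have hpos := hS.inv.det_pos
    rw [hB, det_mul, h, mul_zero] at hpos
    exact hpos.false
  have hmeas : Measurable (toLin' B) := (toLin' B).continuous_of_finiteDimensional.measurable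
  simp only [multivariateGaussianPDF_eq_abs_det_mul c hS.det_pos hB]
  calc ∫ x, |B.det| * multivariateGaussianPDF 0 1 (B *ᵥ (x - c))
      = |B.det| * ∫ x, multivariateGaussianPDF 0 1 (toLin' B x) := by
        rw [integral_const_mul,
          integral_sub_right_eq_self (fun x ↦ multivariateGaussianPDF 0 1 (B *ᵥ x)) c]
        simp only [toLin'_apply]
    _ = |B.det| * ∫ y, multivariateGaussianPDF 0 1 y ∂(volume.map (toLin' B)) := by
        rw [integral_map hmeas.aemeasurable
          (measurable_multivariateGaussianPDF 0 1).aestronglyMeasurable]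
    _ = |B.det| * |B.det|⁻¹ := by
        rw [map_matrix_volume_pi_eq_smul_volume_pi hBdet, integral_smul_measure,
          integral_multivariateGaussianPDF_zero_one, ENNReal.toReal_ofReal (abs_nonneg _), abs_inv,
          smul_eq_mul, mul_one]
    _ = 1 := mul_inv_cancel₀ (abs_ne_zero.mpr hBdet)

theorem integrable_multivariateGaussianPDF (c : ι → ℝ) {S : Matrix ι ι ℝ} (hS : S.PosDef) :
    Integrable (multivariateGaussianPDF c S) :=
  Integrable.of_integral_ne_zero (by simp [integral_multivariateGaussianPDF c hS])

end Multivariate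

section GaussianWithMarginal

variable {ι : Type*} [Fintype ι]

/-- The linear map sending `(t, y)` to the vector `y` with its component along the unit vector `e`
replaced by `t`. -/
noncomputable def replaceComponent (e : ι → ℝ) : ℝ × (ι → ℝ) →L[ℝ] (ι → ℝ) :=
  LinearMap.toContinuousLinearMap
    { toFun := fun z ↦ z.1 • e + (z.2 - (e ⬝ᵥ z.2) • e)
      map_add' := fun x y ↦ by simp only [Prod.fst_add, Prod.snd_add, dotProduct_add]; module
      map_smul' := fun r y ↦ by
        simp only [Prod.smul_fst, Prod.smul_snd, dotProduct_smul, smul_eq_mul, RingHom.id_apply]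
        module }

theorem replaceComponent_apply (e : ι → ℝ) (z : ℝ × (ι → ℝ)) :
    replaceComponent e z = z.1 • e + (z.2 - (e ⬝ᵥ z.2) • e) := rfl

theorem dotProduct_replaceComponent {e : ι → ℝ} (he : e ⬝ᵥ e = 1) (z : ℝ × (ι → ℝ)) :
    e ⬝ᵥ replaceComponent e z = z.1 := by
  simp [replaceComponent_apply, dotProduct_add, dotProduct_sub, dotProduct_smul, he]

/-- The law on `ℝ^ι` of `replaceComponent e (t, y)`, where `t` has law `ρ` and `y` is an
independent standard Gaussian vector. For a unit vector `e` this is the standard Gaussian law with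
its marginal along `e` replaced by `ρ`. -/
noncomputable def gaussianWithMarginal (e : ι → ℝ) (ρ : Measure ℝ) : Measure (ι → ℝ) :=
  (ρ.prod (Measure.pi fun _ ↦ gaussianReal 0 1)).map (replaceComponent e)

instance (e : ι → ℝ) (ρ : Measure ℝ) [IsProbabilityMeasure ρ] :
    IsProbabilityMeasure (gaussianWithMarginal e ρ) :=
  Measure.isProbabilityMeasure_map (replaceComponent e).measurable.aemeasurable

theorem memLp_id_pi_gaussianReal :
    MemLp id 2 (Measure.pi fun _ : ι ↦ gaussianReal 0 1) :=
  MemLp.of_eval fun i ↦ (memLp_id_gaussianReal 2).comp_measurePreserving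
    (measurePreserving_eval (fun _ : ι ↦ gaussianReal 0 1) i)

theorem memLp_id_gaussianWithMarginal (e : ι → ℝ) {ρ : Measure ℝ} [IsProbabilityMeasure ρ]
    (hρ : MemLp id 2 ρ) : MemLp id 2 (gaussianWithMarginal e ρ) := by
  rw [gaussianWithMarginal, memLp_map_measure_iff aestronglyMeasurable_id (by fun_prop)]
  exact (replaceComponent e).comp_memLp'
    (MemLp.of_fst_snd ⟨hρ.comp_fst _, memLp_id_pi_gaussianReal.comp_snd ρ⟩)

theorem gaussianWithMarginal_smul (e : ι → ℝ) (C : ℝ≥0∞) (ρ : Measure ℝ) [SFinite ρ] :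
    gaussianWithMarginal e (C • ρ) = C • gaussianWithMarginal e ρ := by
  rw [gaussianWithMarginal, Measure.prod_smul_left, Measure.map_smul]
  rfl

theorem gaussianWithMarginal_withDensity {e : ι → ℝ} (he : e ⬝ᵥ e = 1) (ρ : Measure ℝ) [SFinite ρ]
    {f : ℝ → ℝ≥0∞} (hf : Measurable f) :
    gaussianWithMarginal e (ρ.withDensity f) =
      (gaussianWithMarginal e ρ).withDensity fun x ↦ f (e ⬝ᵥ x) := by
  have hfe : Measurable fun x : ι → ℝ ↦ f (e ⬝ᵥ x) := by
    simp only [dotProduct]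
    fun_prop
  rw [gaussianWithMarginal, prod_withDensity_left hf, gaussianWithMarginal,
    ← map_withDensity_comp (replaceComponent e).measurable hfe]
  simp only [Function.comp_def, dotProduct_replaceComponent he]

theorem charFunDual_gaussianReal_zero_one (L : StrongDual ℝ ℝ) :
    charFunDual (gaussianReal 0 1) L = Complex.exp (-L 1 ^ 2 / 2 : ℝ) := by
  rw [charFunDual_eq_charFun_map_one, gaussianReal_map_continuousLinearMap, charFun_gaussianReal]
  simp [neg_div, max_eq_left (sq_nonneg (L 1))]

theorem charFunDual_pi_gaussianReal [DecidableEq ι] (L : StrongDual ℝ (ι → ℝ)) :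
    charFunDual (Measure.pi fun _ ↦ gaussianReal 0 1) L =
      Complex.exp (-(∑ i, L (Pi.single i 1) ^ 2) / 2 : ℝ) := by
  simp [charFunDual_pi, charFunDual_gaussianReal_zero_one, ← Complex.exp_sum, ← Finset.sum_div]

theorem gaussianWithMarginal_gaussianReal {e : ι → ℝ} (he : e ⬝ᵥ e = 1) :
    gaussianWithMarginal e (gaussianReal 0 1) = Measure.pi fun _ ↦ gaussianReal 0 1 := by
  classical
  refine Measure.ext_of_charFunDual (funext fun L ↦ ?_)
  have hLe : L e = ∑ i, e i * L (Pi.single i 1) := by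
    conv_lhs => rw [pi_eq_sum_univ' e]
    simp [map_sum]
  have hinl : (L.comp (replaceComponent e)).comp (.inl ℝ ℝ (ι → ℝ)) 1 = L e := by
    simp [replaceComponent_apply]
  have hinr (i : ι) : (L.comp (replaceComponent e)).comp (.inr ℝ ℝ (ι → ℝ)) (Pi.single i 1) =
      L (Pi.single i 1) - e i * L e := by simp [replaceComponent_apply]
  have hpythagoras : L e ^ 2 + ∑ i, (L (Pi.single i 1) - e i * L e) ^ 2 =
      ∑ i, L (Pi.single i 1) ^ 2 := by
    have hexpand (i : ι) : (L (Pi.single i 1) - e i * L e) ^ 2 =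
        L (Pi.single i 1) ^ 2 - 2 * L e * (e i * L (Pi.single i 1)) + L e ^ 2 * (e i * e i) := by
      ring
    simp only [hexpand, Finset.sum_add_distrib, Finset.sum_sub_distrib, ← Finset.mul_sum, ← hLe]
    rw [show ∑ i, e i * e i = 1 from he]
    ring
  rw [gaussianWithMarginal, charFunDual_map, charFunDual_prod, charFunDual_gaussianReal_zero_one,
    charFunDual_pi_gaussianReal, charFunDual_pi_gaussianReal, ← Complex.exp_add, hinl]
  simp only [hinr, ← hpythagoras]
  push_cast
  ring_nf

theorem integral_quadratic_eq {ρ : Measure ℝ} [IsProbabilityMeasure ρ] (hρ : MemLp id 2 ρ)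
    (a b c : ℝ) :
    ∫ t, (a * t ^ 2 + b * t + c) ∂ρ = a * (Var[id; ρ] + (∫ t, t ∂ρ) ^ 2) + b * (∫ t, t ∂ρ) + c := by
  have hid : Integrable (fun t : ℝ ↦ t) ρ := hρ.integrable one_le_two
  have hsq : Integrable (fun t : ℝ ↦ t ^ 2) ρ := hρ.integrable_sq
  have hlin : Integrable (fun t : ℝ ↦ b * t) ρ := hid.const_mul b
  rw [integral_add (by fun_prop) (integrable_const c), integral_add (by fun_prop) hlin,
    integral_const_mul, integral_const_mul, variance_eq_sub hρ]
  simp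

theorem IsQuadratic.integral_gaussianWithMarginal_congr {F : (ι → ℝ) → ℝ} (hF : IsQuadratic F)
    (e : ι → ℝ) {ρ τ : Measure ℝ} [IsProbabilityMeasure ρ] [IsProbabilityMeasure τ]
    (hρ : MemLp id 2 ρ) (hτ : MemLp id 2 τ) (hmean : ∫ t, t ∂ρ = ∫ t, t ∂τ)
    (hvar : Var[id; ρ] = Var[id; τ]) :
    ∫ x, F x ∂(gaussianWithMarginal e ρ) = ∫ x, F x ∂(gaussianWithMarginal e τ) := by
  have hfubini (σ : Measure ℝ) [IsProbabilityMeasure σ] (hσ : MemLp id 2 σ) :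
      ∫ x, F x ∂(gaussianWithMarginal e σ) =
        ∫ y, ∫ t, F (replaceComponent e (t, y)) ∂σ ∂(Measure.pi fun _ ↦ gaussianReal 0 1) := by
    have hint := hF.integrable (memLp_id_gaussianWithMarginal e hσ)
    rw [gaussianWithMarginal, integrable_map_measure hF.measurable.aestronglyMeasurable
      (by fun_prop)] at hint
    rw [gaussianWithMarginal, integral_map (by fun_prop) hF.measurable.aestronglyMeasurable]
    exact integral_prod_symm _ hint
  rw [hfubini ρ hρ, hfubini τ hτ]
  refine integral_congr_ae (Filter.Eventually.of_forall fun y ↦ ?_)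
  obtain ⟨a, b, c, hline⟩ := hF.exists_forall_smul_add_eq e (y - (e ⬝ᵥ y) • e)
  simp only [replaceComponent_apply, hline, integral_quadratic_eq hρ, integral_quadratic_eq hτ,
    hmean, hvar]

end GaussianWithMarginal

section Posterior

variable {ι : Type*} [Fintype ι] [DecidableEq ι]

/-- The posterior density `ℓ(x)p(x) / ∫ ℓ p` of the likelihood `ℓ` under the standard Gaussian prior
`p` on `ℝ^ι`. The ideal importance sampling density is the case where `ℓ` is an indicator. -/
noncomputable def posteriorPDF (ℓ : (ι → ℝ) → ℝ) (x : ι → ℝ) : ℝ :=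
  ℓ x * multivariateGaussianPDF 0 1 x / ∫ y, ℓ y * multivariateGaussianPDF 0 1 y

theorem posteriorPDF_nonneg {ℓ : (ι → ℝ) → ℝ} (hℓ : ∀ x, 0 ≤ ℓ x) (x : ι → ℝ) :
    0 ≤ posteriorPDF ℓ x :=
  have hjoint (x : ι → ℝ) : 0 ≤ ℓ x * multivariateGaussianPDF 0 1 x :=
    mul_nonneg (hℓ x) (multivariateGaussianPDF_pos 0 .one x).le
  div_nonneg (hjoint x) (integral_nonneg hjoint)

theorem posteriorPDF_pos {ℓ : (ι → ℝ) → ℝ} (hℓ : ∀ x, 0 < ℓ x)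
    (hev : 0 < ∫ x, ℓ x * multivariateGaussianPDF 0 1 x) (x : ι → ℝ) : 0 < posteriorPDF ℓ x :=
  div_pos (mul_pos (hℓ x) (multivariateGaussianPDF_pos 0 .one x)) hev

theorem measurable_posteriorPDF {ℓ : (ι → ℝ) → ℝ} (hℓ : Measurable ℓ) :
    Measurable (posteriorPDF ℓ) :=
  (hℓ.mul (measurable_multivariateGaussianPDF 0 1)).div_const _

theorem isQuadratic_log_posteriorPDF {ℓ : (ι → ℝ) → ℝ} (hℓ : ∀ x, 0 < ℓ x)
    (hev : 0 < ∫ x, ℓ x * multivariateGaussianPDF 0 1 x) (hquad : IsQuadratic fun x ↦ log (ℓ x)) :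
    IsQuadratic fun x ↦ log (posteriorPDF ℓ x) := by
  have hlog (x : ι → ℝ) : log (posteriorPDF ℓ x) =
      log (ℓ x) + log (multivariateGaussianPDF 0 1 x) -
        log (∫ y, ℓ y * multivariateGaussianPDF 0 1 y) := by
    have hp := multivariateGaussianPDF_pos 0 .one x
    rw [posteriorPDF, log_div (mul_pos (hℓ x) hp).ne' hev.ne', log_mul (hℓ x).ne' hp.ne']
  simp only [hlog]
  exact (hquad.add (isQuadratic_log_multivariateGaussianPDF 0 .one)).sub (.const _)

theorem posteriorPDF_indicator_mul_log_div {ℓ : (ι → ℝ) → ℝ} (hℓ : ∀ x, 0 < ℓ x)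
    (hev : 0 < ∫ x, ℓ x * multivariateGaussianPDF 0 1 x) {s : Set (ι → ℝ)}
    (hevs : 0 < ∫ x, s.indicator 1 x * multivariateGaussianPDF 0 1 x) (x : ι → ℝ) :
    posteriorPDF (s.indicator 1) x * log (posteriorPDF (s.indicator 1) x / posteriorPDF ℓ x) =
      posteriorPDF (s.indicator 1) x *
        (log ((∫ y, ℓ y * multivariateGaussianPDF 0 1 y) /
          ∫ y, s.indicator 1 y * multivariateGaussianPDF 0 1 y) - log (ℓ x)) := by
  by_cases hx : x ∈ s
  · have hp := multivariateGaussianPDF_pos 0 .one x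
    rw [← log_div (div_pos hev hevs).ne' (hℓ x).ne', posteriorPDF, posteriorPDF,
      Set.indicator_of_mem hx, Pi.one_apply]
    congr 2
    field_simp [(hℓ x).ne']
  · simp [posteriorPDF, Set.indicator_of_notMem hx]

section RidgeLikelihood

variable {e : ι → ℝ} {h : ℝ → ℝ} {C : ℝ≥0∞} {ρ : Measure ℝ} [IsProbabilityMeasure ρ]

theorem withDensity_ridge_mul_multivariateGaussianPDF (he : e ⬝ᵥ e = 1) (hm : Measurable h)
    (h0 : ∀ t, 0 ≤ h t)
    (hρ : (gaussianReal 0 1).withDensity (fun t ↦ ENNReal.ofReal (h t)) = C • ρ) :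
    volume.withDensity
        (fun x ↦ ENNReal.ofReal (h (e ⬝ᵥ x) * multivariateGaussianPDF 0 1 x)) =
      C • gaussianWithMarginal e ρ := by
  have hhe : Measurable fun x : ι → ℝ ↦ ENNReal.ofReal (h (e ⬝ᵥ x)) := by
    simp only [dotProduct]
    fun_prop
  rw [← gaussianWithMarginal_smul, ← hρ, gaussianWithMarginal_withDensity he _ hm.ennreal_ofReal,
    gaussianWithMarginal_gaussianReal he, pi_gaussianReal_eq_withDensity,
    ← withDensity_mul _ (measurable_multivariateGaussianPDF 0 1).ennreal_ofReal hhe]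
  refine congrArg _ (funext fun x ↦ ?_)
  rw [Pi.mul_apply, ENNReal.ofReal_mul (h0 _), mul_comm]

theorem integral_ridge_mul_multivariateGaussianPDF (he : e ⬝ᵥ e = 1) (hm : Measurable h)
    (h0 : ∀ t, 0 ≤ h t)
    (hρ : (gaussianReal 0 1).withDensity (fun t ↦ ENNReal.ofReal (h t)) = C • ρ) :
    ∫ x, h (e ⬝ᵥ x) * multivariateGaussianPDF 0 1 x = C.toReal := by
  have hhe : Measurable fun x : ι → ℝ ↦ h (e ⬝ᵥ x) := by
    simp only [dotProduct]
    fun_prop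
  have hmass := congrArg (· Set.univ) (withDensity_ridge_mul_multivariateGaussianPDF he hm h0 hρ)
  simp only [withDensity_apply _ MeasurableSet.univ, Measure.restrict_univ, Measure.smul_apply,
    measure_univ, smul_eq_mul, mul_one] at hmass
  refine (integral_eq_lintegral_of_nonneg_ae (Filter.Eventually.of_forall fun x ↦ ?_)
    (hhe.mul (measurable_multivariateGaussianPDF 0 1)).aestronglyMeasurable).trans
      (congrArg ENNReal.toReal hmass)
  exact mul_nonneg (h0 _) (multivariateGaussianPDF_pos 0 .one x).le

theorem withDensity_posteriorPDF_ridge (he : e ⬝ᵥ e = 1) (hm : Measurable h) (h0 : ∀ t, 0 ≤ h t)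
    (hρ : (gaussianReal 0 1).withDensity (fun t ↦ ENNReal.ofReal (h t)) = C • ρ)
    (hC : C ≠ 0) (hC' : C ≠ ∞) :
    volume.withDensity (fun x ↦ ENNReal.ofReal (posteriorPDF (fun x ↦ h (e ⬝ᵥ x)) x)) =
      gaussianWithMarginal e ρ := by
  have hjoint : Measurable fun x : ι → ℝ ↦
      ENNReal.ofReal (h (e ⬝ᵥ x) * multivariateGaussianPDF 0 1 x) := by
    have := measurable_multivariateGaussianPDF (0 : ι → ℝ) 1
    simp only [dotProduct]
    fun_prop
  have hscale (x : ι → ℝ) : ENNReal.ofReal (posteriorPDF (fun x ↦ h (e ⬝ᵥ x)) x) =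
      C⁻¹ * ENNReal.ofReal (h (e ⬝ᵥ x) * multivariateGaussianPDF 0 1 x) := by
    rw [posteriorPDF, integral_ridge_mul_multivariateGaussianPDF he hm h0 hρ,
      ENNReal.ofReal_div_of_pos (ENNReal.toReal_pos hC hC'), ENNReal.ofReal_toReal hC',
      ENNReal.div_eq_inv_mul]
  simp only [hscale, ← smul_eq_mul C⁻¹]
  rw [← Pi.smul_def, withDensity_smul _ hjoint,
    withDensity_ridge_mul_multivariateGaussianPDF he hm h0 hρ, smul_smul,
    ENNReal.inv_mul_cancel hC hC', one_smul]

end RidgeLikelihood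

end Posterior

section UnitVector

variable {ι : Type*} [Fintype ι] {v : ι → ℝ}

theorem sqrt_dotProduct_self_pos (hv : v ≠ 0) : 0 < √(v ⬝ᵥ v) :=
  sqrt_pos.mpr (dotProduct_star_self_pos_iff.mpr hv)

theorem exists_unit_forall_dotProduct_eq (hv : v ≠ 0) :
    ∃ e : ι → ℝ, e ⬝ᵥ e = 1 ∧ ∀ x, v ⬝ᵥ x = √(v ⬝ᵥ v) * (e ⬝ᵥ x) := by
  have hvv : 0 < v ⬝ᵥ v := sqrt_pos.mp (sqrt_dotProduct_self_pos hv)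
  refine ⟨(√(v ⬝ᵥ v))⁻¹ • v, ?_, fun x ↦ ?_⟩
  · rw [smul_dotProduct, dotProduct_smul, smul_smul, ← mul_inv, mul_self_sqrt hvv.le, smul_eq_mul,
      inv_mul_cancel₀ hvv.ne']
  · rw [smul_dotProduct, smul_eq_mul, mul_inv_cancel_left₀ (sqrt_dotProduct_self_pos hv).ne']

end UnitVector

theorem mul_add_mem_Icc_iff {n : ℝ} (hn : 0 < n) (β ymin ymax t : ℝ) :
    n * t + β ∈ Set.Icc ymin ymax ↔ t ∈ Set.Icc ((ymin - β) / n) ((ymax - β) / n) := by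
  rw [Set.mem_Icc, Set.mem_Icc, div_le_iff₀' hn, le_div_iff₀' hn, sub_le_iff_le_add,
    le_sub_iff_add_le]

theorem posterior_mean_and_variance_eq {n ω : ℝ} (hn : n ≠ 0) (hω : ω < 1) (φ β : ℝ) :
    φ = n * (n * φ / (1 - ω) + β - β) / (n ^ 2 + n ^ 2 * ω / (1 - ω)) ∧
      ω = n ^ 2 * ω / (1 - ω) / (n ^ 2 + n ^ 2 * ω / (1 - ω)) := by
  have hω' : 1 - ω ≠ 0 := (sub_pos.mpr hω).ne'
  have hprecision : n ^ 2 + n ^ 2 * ω / (1 - ω) = n ^ 2 / (1 - ω) := by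
    field_simp
    ring
  rw [hprecision]
  constructor <;> field_simp
  ring

section Optimality

theorem withDensity_indicator_one_eq_smul_cond {Ω : Type*} [MeasurableSpace Ω] {μ : Measure Ω}
    [IsFiniteMeasure μ] {s : Set Ω} (hs : MeasurableSet s) (hμs : μ s ≠ 0) :
    μ.withDensity (fun x ↦ ENNReal.ofReal (s.indicator 1 x)) = μ s • μ[|s] := by
  have hofReal : (fun x ↦ ENNReal.ofReal (s.indicator 1 x)) = s.indicator 1 := by
    ext x
    by_cases hx : x ∈ s <;> simp [hx]
  rw [hofReal, withDensity_indicator_one hs, ProbabilityTheory.cond, smul_smul,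
    ENNReal.mul_inv_cancel hμs (measure_ne_top μ s), one_smul]

variable {ι : Type*} [Fintype ι]

theorem IsQuadratic.log_gaussianPDFReal_affine (u : ι → ℝ) (β y : ℝ) {s : ℝ≥0} (hs : s ≠ 0) :
    IsQuadratic fun x ↦ log (gaussianPDFReal (u ⬝ᵥ x + β) s y) := by
  have hlog (x : ι → ℝ) : log (gaussianPDFReal (u ⬝ᵥ x + β) s y) =
      log (√(2 * π * s))⁻¹ + -(1 / (2 * s)) * (u ⬝ᵥ x + (β - y)) ^ 2 := by
    rw [gaussianPDFReal, log_mul (by positivity) (exp_pos _).ne', log_exp]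
    ring
  simp only [hlog]
  exact (IsQuadratic.const _).add ((IsQuadratic.sq_affine u _).const_mul _)

theorem integral_mul_log_div_le_of_withDensity_eq_gaussianWithMarginal (e : ι → ℝ) {τ ρ : Measure ℝ}
    [IsProbabilityMeasure τ] [IsProbabilityMeasure ρ] (hτ : MemLp id 2 τ) (hρ : MemLp id 2 ρ)
    (hmean : ∫ t, t ∂τ = ∫ t, t ∂ρ) (hvar : Var[id; τ] = Var[id; ρ])
    {ν : Measure (ι → ℝ)} {q r g G : (ι → ℝ) → ℝ}
    (hqm : Measurable q) (hq : ∀ x, 0 ≤ q x)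
    (hqτ : ν.withDensity (fun x ↦ ENNReal.ofReal (q x)) = gaussianWithMarginal e τ)
    (hrm : Measurable r) (hr : ∀ x, 0 < r x)
    (hrρ : ν.withDensity (fun x ↦ ENNReal.ofReal (r x)) = gaussianWithMarginal e ρ)
    (hg : ∀ x, 0 < g x) (hgi : Integrable g ν) (hgmass : ∫ x, g x ∂ν ≤ 1)
    (hlogr : IsQuadratic fun x ↦ log (r x)) (hlogg : IsQuadratic fun x ↦ log (g x))
    (hG : IsQuadratic G) (hqr : ∀ x, q x * log (q x / r x) = q x * G x) :
    ∫ x, q x * log (q x / r x) ∂ν ≤ ∫ x, q x * log (q x / g x) ∂ν := by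
  have hlog : IsQuadratic fun x ↦ log (r x / g x) := by
    simpa only [log_div (hr _).ne' (hg _).ne'] using hlogr.sub hlogg
  have integrable_q {F : (ι → ℝ) → ℝ} (hF : IsQuadratic F) : Integrable (fun x ↦ q x * F x) ν := by
    rw [← integrable_withDensity_ofReal_iff hqm hq, hqτ]
    exact hF.integrable (memLp_id_gaussianWithMarginal e hτ)
  have integrable_r {F : (ι → ℝ) → ℝ} (hF : IsQuadratic F) : Integrable (fun x ↦ r x * F x) ν := by
    rw [← integrable_withDensity_ofReal_iff hrm fun x ↦ (hr x).le, hrρ]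
    exact hF.integrable (memLp_id_gaussianWithMarginal e hρ)
  have hri : Integrable r ν := by simpa only [mul_one] using integrable_r (.const 1)
  have hrmass : ∫ x, r x ∂ν = 1 := by
    have := integral_withDensity_ofReal (ν := ν) hrm (fun x ↦ (hr x).le) 1
    simpa [hrρ] using this.symm
  refine integral_mul_log_div_le_of_integral_mul_log_div_eq hr hg hri hgi
    (hgmass.trans_eq hrmass.symm) (by simpa only [hqr] using integrable_q hG) (integrable_q hlog)
    (integrable_r hlog) ?_
  rw [← integral_withDensity_ofReal hqm hq, ← integral_withDensity_ofReal hrm fun x ↦ (hr x).le,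
    hqτ, hrρ]
  exact hlog.integral_gaussianWithMarginal_congr e hτ hρ hmean hvar

variable [DecidableEq ι] {e : ι → ℝ}

section Truncation

variable {A : Set ℝ}

theorem integral_indicator_mul_multivariateGaussianPDF_pos (he : e ⬝ᵥ e = 1)
    (hA : MeasurableSet A) (hA0 : gaussianReal 0 1 A ≠ 0) :
    0 < ∫ x, ((e ⬝ᵥ ·) ⁻¹' A).indicator 1 x * multivariateGaussianPDF 0 1 x := by
  have := cond_isProbabilityMeasure hA0
  refine (ENNReal.toReal_pos hA0 (measure_ne_top _ A)).trans_eq ?_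
  exact (integral_ridge_mul_multivariateGaussianPDF he (measurable_one.indicator hA)
    (Set.indicator_nonneg fun _ _ ↦ zero_le_one)
    (withDensity_indicator_one_eq_smul_cond hA hA0)).symm

theorem withDensity_posteriorPDF_indicator (he : e ⬝ᵥ e = 1)
    (hA : MeasurableSet A) (hA0 : gaussianReal 0 1 A ≠ 0) :
    volume.withDensity
        (fun x ↦ ENNReal.ofReal (posteriorPDF (((e ⬝ᵥ ·) ⁻¹' A).indicator 1) x)) =
      gaussianWithMarginal e (gaussianReal 0 1)[|A] := by
  have := cond_isProbabilityMeasure hA0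
  exact withDensity_posteriorPDF_ridge (h := A.indicator 1) he (measurable_one.indicator hA)
    (Set.indicator_nonneg fun _ _ ↦ zero_le_one)
    (withDensity_indicator_one_eq_smul_cond hA hA0) hA0 (measure_ne_top _ A)

end Truncation

section GaussianLikelihood

variable (n β y : ℝ) {s : ℝ≥0}

theorem measurable_gaussianPDFReal_affine : Measurable fun t ↦ gaussianPDFReal (n * t + β) s y := by
  simp only [gaussianPDFReal]
  fun_prop

theorem integral_gaussianPDFReal_mul_multivariateGaussianPDF_pos (he : e ⬝ᵥ e = 1) (hs : s ≠ 0) :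
    0 < ∫ x, gaussianPDFReal (n * (e ⬝ᵥ x) + β) s y * multivariateGaussianPDF 0 1 x := by
  rw [integral_ridge_mul_multivariateGaussianPDF he (measurable_gaussianPDFReal_affine n β y)
    (fun t ↦ gaussianPDFReal_nonneg _ _ _) (withDensity_gaussianPDFReal_affine n β y hs),
    toReal_gaussianPDF]
  exact gaussianPDFReal_pos _ _ _ (by positivity)

theorem withDensity_posteriorPDF_gaussianPDFReal (he : e ⬝ᵥ e = 1) (hs : s ≠ 0) :
    volume.withDensity (fun x ↦ ENNReal.ofReal
        (posteriorPDF (fun x ↦ gaussianPDFReal (n * (e ⬝ᵥ x) + β) s y) x)) =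
      gaussianWithMarginal e
        (gaussianReal (n * (y - β) / (n ^ 2 + s)) (s / (‖n‖₊ ^ 2 + s))) :=
  withDensity_posteriorPDF_ridge (h := fun t ↦ gaussianPDFReal (n * t + β) s y) he
    (measurable_gaussianPDFReal_affine n β y) (fun t ↦ gaussianPDFReal_nonneg _ _ _)
    (withDensity_gaussianPDFReal_affine n β y hs) (gaussianPDF_pos β (by positivity) y).ne'
    ENNReal.ofReal_ne_top

end GaussianLikelihood

theorem integral_posteriorPDF_indicator_mul_log_div_le (he : e ⬝ᵥ e = 1) {A : Set ℝ}
    (hA : MeasurableSet A) (hA0 : gaussianReal 0 1 A ≠ 0) (n β y : ℝ) {s : ℝ≥0} (hs : s ≠ 0)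
    (hmean : ∫ t, t ∂(gaussianReal 0 1)[|A] = n * (y - β) / (n ^ 2 + s))
    (hvar : Var[id; (gaussianReal 0 1)[|A]] = s / (n ^ 2 + s))
    (c : ι → ℝ) {S : Matrix ι ι ℝ} (hS : S.PosDef) :
    let q := posteriorPDF (((e ⬝ᵥ ·) ⁻¹' A).indicator 1)
    ∫ x, q x * log (q x / posteriorPDF (fun x ↦ gaussianPDFReal (n * (e ⬝ᵥ x) + β) s y) x) ≤
      ∫ x, q x * log (q x / multivariateGaussianPDF c S x) := by
  intro q
  have := cond_isProbabilityMeasure hA0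
  have hproj : Measurable fun x : ι → ℝ ↦ e ⬝ᵥ x := by
    simp only [dotProduct]
    fun_prop
  have hlik (x : ι → ℝ) : 0 < gaussianPDFReal (n * (e ⬝ᵥ x) + β) s y := gaussianPDFReal_pos _ _ _ hs
  have hev := integral_gaussianPDFReal_mul_multivariateGaussianPDF_pos n β y he hs
  have hevA := integral_indicator_mul_multivariateGaussianPDF_pos he hA hA0
  have hloglik : IsQuadratic fun x ↦ log (gaussianPDFReal (n * (e ⬝ᵥ x) + β) s y) := by
    simpa only [smul_dotProduct, smul_eq_mul] using
      IsQuadratic.log_gaussianPDFReal_affine (n • e) β y hs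
  exact integral_mul_log_div_le_of_withDensity_eq_gaussianWithMarginal e
    (memLp_cond hA0 (memLp_id_gaussianReal 2)) (memLp_id_gaussianReal 2)
    (by rw [integral_id_gaussianReal, hmean]) (by rw [variance_id_gaussianReal, hvar]; simp)
    (measurable_posteriorPDF (measurable_one.indicator (hproj hA)))
    (posteriorPDF_nonneg (Set.indicator_nonneg fun _ _ ↦ zero_le_one))
    (withDensity_posteriorPDF_indicator he hA hA0)
    (measurable_posteriorPDF ((measurable_gaussianPDFReal_affine n β y).comp hproj))
    (posteriorPDF_pos hlik hev)
    (withDensity_posteriorPDF_gaussianPDFReal n β y he hs)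
    (multivariateGaussianPDF_pos c hS) (integrable_multivariateGaussianPDF c hS)
    (integral_multivariateGaussianPDF c hS).le
    (isQuadratic_log_posteriorPDF hlik hev hloglik)
    (isQuadratic_log_multivariateGaussianPDF c hS) ((IsQuadratic.const _).sub hloglik)
    (posteriorPDF_indicator_mul_log_div hlik hev hevA)

theorem integral_posteriorPDF_Icc_mul_log_div_le {v : ι → ℝ} (hv : v ≠ 0)
    {β ymin ymax n φ ω y : ℝ} {s : ℝ≥0} (hY : ymin < ymax)
    (hn : n = √(v ⬝ᵥ v))
    (hφ : ∫ t, t ∂(gaussianReal 0 1)[|Set.Icc ((ymin - β) / n) ((ymax - β) / n)] = φ)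
    (hω : Var[id; (gaussianReal 0 1)[|Set.Icc ((ymin - β) / n) ((ymax - β) / n)]] = ω)
    (hy : y = n * φ / (1 - ω) + β) (hs : s = n ^ 2 * ω / (1 - ω))
    (c : ι → ℝ) {S : Matrix ι ι ℝ} (hS : S.PosDef) :
    let q := posteriorPDF (((v ⬝ᵥ · + β) ⁻¹' Set.Icc ymin ymax).indicator 1)
    ∫ x, q x * log (q x / posteriorPDF (fun x ↦ gaussianPDFReal (v ⬝ᵥ x + β) s y) x) ≤
      ∫ x, q x * log (q x / multivariateGaussianPDF c S x) := by
  intro q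
  obtain ⟨e, he, hve⟩ := exists_unit_forall_dotProduct_eq hv
  have hn0 : 0 < n := hn ▸ sqrt_dotProduct_self_pos hv
  rw [← hn] at hve
  have hab : (ymin - β) / n < (ymax - β) / n :=
    div_lt_div_of_pos_right (sub_lt_sub_right hY β) hn0
  obtain ⟨hω0, hω1⟩ := hω ▸ gaussianReal_cond_Icc_variance_mem_Ioo hab
  have hs0 : (s : ℝ) ≠ 0 :=
    hs ▸ (div_pos (mul_pos (pow_pos hn0 2) hω0) (sub_pos.mpr hω1)).ne'
  obtain ⟨hmean, hvar⟩ := posterior_mean_and_variance_eq hn0.ne' hω1 φ β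
  rw [← hy, ← hs] at hmean
  rw [← hs] at hvar
  have hpreimage : (v ⬝ᵥ · + β) ⁻¹' Set.Icc ymin ymax =
      (e ⬝ᵥ ·) ⁻¹' Set.Icc ((ymin - β) / n) ((ymax - β) / n) := by
    ext x
    rw [Set.mem_preimage, Set.mem_preimage, hve, mul_add_mem_Icc_iff hn0]
  simp only [q, hpreimage]
  simp only [hve]
  exact integral_posteriorPDF_indicator_mul_log_div_le he measurableSet_Icc
    (gaussianReal_Icc_ne_zero hab) n β y (NNReal.coe_ne_zero.mp hs0) (hφ.trans hmean)
    (hω.trans hvar) c hS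

end Optimality

/-- BIMC optimality in the affine-Gaussian case: with standard Gaussian prior `p`
on `ℝᵐ`, affine map `f(x) = vᵀx + β`, target interval `Y = [y_min, y_max]`, and
optimal parameters `y* = ‖v‖φ_T/(1-ω_T²) + β`, `σ*² = ‖v‖²ω_T²/(1-ω_T²)` (where
`φ_T`, `ω_T²` are the mean and variance of the standard normal truncated to
`[(y_min-β)/‖v‖, (y_max-β)/‖v‖]`), the BIMC posterior density
`q_BIMC(x) = p(y*|x)p(x)/p(y*)` minimizes `D_KL(q* ‖ ·)` over all Gaussian
densities on `ℝᵐ`, where `q*(x) = 1_Y(vᵀx+β)p(x)/μ` is the ideal importance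
sampling density. -/
theorem bimc_optimality (m : ℕ) (v : Fin m → ℝ) (hv : v ≠ 0) (β ymin ymax : ℝ)
    (hY : ymin < ymax) :
    -- standard Gaussian prior density on ℝᵐ
    let p : (Fin m → ℝ) → ℝ := fun x => (2 * π) ^ (-(m : ℝ) / 2) * exp (-(x ⬝ᵥ x) / 2)
    let nv : ℝ := Real.sqrt (v ⬝ᵥ v)
    -- one-dimensional standard normal density
    let p₁ : ℝ → ℝ := fun t => (2 * π) ^ (-(1 : ℝ) / 2) * exp (-t ^ 2 / 2)
    -- truncation interval for x₁ and truncated moments φ_T, ω_T²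
    let a : ℝ := (ymin - β) / nv
    let b : ℝ := (ymax - β) / nv
    let Z : ℝ := ∫ t in Set.Icc a b, p₁ t
    let φT : ℝ := (∫ t in Set.Icc a b, t * p₁ t) / Z
    let ωT2 : ℝ := (∫ t in Set.Icc a b, t ^ 2 * p₁ t) / Z - φT ^ 2
    -- optimal pseudo-data and likelihood variance
    let ystar : ℝ := nv * φT / (1 - ωT2) + β
    let σstar2 : ℝ := nv ^ 2 * ωT2 / (1 - ωT2)
    -- likelihood, evidence and BIMC posterior density
    let lik : (Fin m → ℝ) → ℝ := fun x =>
      (Real.sqrt (2 * π * σstar2))⁻¹ * exp (-(ystar - (v ⬝ᵥ x + β)) ^ 2 / (2 * σstar2))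
    let py : ℝ := ∫ x : Fin m → ℝ, lik x * p x
    let qBIMC : (Fin m → ℝ) → ℝ := fun x => lik x * p x / py
    -- ideal importance sampling density
    let μ : ℝ := ∫ x : Fin m → ℝ,
      Set.indicator (Set.Icc ymin ymax) (fun _ => (1 : ℝ)) (v ⬝ᵥ x + β) * p x
    let qstar : (Fin m → ℝ) → ℝ := fun x =>
      Set.indicator (Set.Icc ymin ymax) (fun _ => (1 : ℝ)) (v ⬝ᵥ x + β) * p x / μ
    -- KL divergence from qstar to a candidate density
    let KL : ((Fin m → ℝ) → ℝ) → ℝ := fun g => ∫ x : Fin m → ℝ,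
      qstar x * Real.log (qstar x / g x)
    -- q_BIMC is the Gaussian density on ℝᵐ closest in KL divergence to qstar
    ∀ (c : Fin m → ℝ) (S : Matrix (Fin m) (Fin m) ℝ), S.PosDef →
      KL qBIMC ≤ KL (fun x => (2 * π) ^ (-(m : ℝ) / 2) * S.det ^ (-(1 : ℝ) / 2) *
        exp (-(1 / 2) * ((x - c) ⬝ᵥ S⁻¹ *ᵥ (x - c)))) := by
  intro p nv p₁ a b Z φT ωT2 ystar σstar2 lik py qBIMC μ qstar KL c S hS
  have hnv : 0 < nv := sqrt_dotProduct_self_pos hv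
  have hab : a < b := div_lt_div_of_pos_right (sub_lt_sub_right hY β) hnv
  have hp₁ : gaussianPDFReal 0 1 = p₁ := funext gaussianPDFReal_zero_one
  have hp : multivariateGaussianPDF 0 1 = p := by
    ext x
    rw [multivariateGaussianPDF_zero_one, Fintype.card_fin]
  have hφ : ∫ t, t ∂(gaussianReal 0 1)[|Set.Icc a b] = φT := by
    rw [integral_gaussianReal_cond measurableSet_Icc, hp₁]
  have hω : Var[id; (gaussianReal 0 1)[|Set.Icc a b]] = ωT2 := by
    rw [variance_id_gaussianReal_cond measurableSet_Icc (gaussianReal_Icc_ne_zero hab), hp₁]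
  obtain ⟨hω0, hω1⟩ := hω ▸ gaussianReal_cond_Icc_variance_mem_Ioo hab
  have hσ : 0 ≤ σstar2 := div_nonneg (mul_nonneg (sq_nonneg nv) hω0.le) (sub_pos.mpr hω1).le
  have hoptimal := integral_posteriorPDF_Icc_mul_log_div_le (y := ystar) (s := ⟨σstar2, hσ⟩) hv hY
    rfl hφ hω rfl rfl c hS
  simp only [posteriorPDF, hp] at hoptimal
  simp only [multivariateGaussianPDF, Fintype.card_fin] at hoptimal
  exact hoptimal
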